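/- (Lemma 3.5) Suppose ε_H ∈ (0,1), ζ ∈ (0,1), ⟨v, ∇²f(x) v⟩ ≥ -ε_H ‖v‖² for all v ∈ ℝⁿ, ‖∇f(x)‖ ≤ U_g with U_g > 0, and ∇f(x) ≠ 0. Let d satisfy ‖(∇²f(x) + 2ε_H I) d + ∇f(x)‖ ≤ (ζ/2)·min{‖∇f(x)‖, ε_H ‖d‖} together with ⟨∇f(x), (∇²f(x) + 2ε_H I) d + ∇f(x)⟩ = 0 (orthogonality of the initial and final CG residuals). Then the smallest nonnegative integer j_k such that f(x + θ^{j_k} d) < f(x) - (η/6) θ^{3 j_k} ‖d‖³ exists and satisfies j_k ≤ [ (1/2) log_θ( (3/(L_H+η)) · (1-ζ) ε_H² / (U_g √(1+ζ²/4)) ) ]_+ + 1, and moreover f(x) - f(x + θ^{j_k} d) ≥ (η/6)·min{ (4/(4 + ζ + √((4+ζ)² + 8 L_H)))³, (3θ²(1-ζ)/(L_H+η))³ } · min{‖∇f(x + θ^{j_k} d)‖³ ε_H^{-3}, ε_H³}. -/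

import Mathlib

open scoped RealInnerProductSpace

theorem aux_grad {E : Type*} [NormedAddCommGroup E] [InnerProductSpace ℝ E]
    (g : E → E) (H : E → E →L[ℝ] E) (hH : ∀ x, HasFDerivAt g (H x) x)
    (L : ℝ) (hlip : ∀ x y, ‖H x - H y‖ ≤ L * ‖x - y‖) (x v : E) :
    ‖g (x + v) - g x - H x v‖ ≤ L / 2 * ‖v‖ ^ 2 := by
  have hline : ∀ t : ℝ, HasDerivAt (fun t : ℝ => x + t • v) v t := fun t => by
    simpa using ((hasDerivAt_id t).smul_const v).const_add x
  have hd : ∀ t : ℝ, HasDerivAt (fun t : ℝ => g (x + t • v) - g x - t • H x v)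
      (H (x + t • v) v - H x v) t := fun t => by
    have h1 := (hH (x + t • v)).comp_hasDerivAt t (hline t)
    have h2 := (h1.sub_const (g x)).sub ((hasDerivAt_id t).smul_const (H x v))
    refine h2.congr_deriv ?_
    simp
  have hB : ∀ t : ℝ, HasDerivAt (fun t : ℝ => L / 2 * ‖v‖ ^ 2 * t ^ 2) (L * ‖v‖ ^ 2 * t) t :=
    fun t => by
      have := (hasDerivAt_pow 2 t).const_mul (L / 2 * ‖v‖ ^ 2)
      refine this.congr_deriv ?_
      push_cast; ring
  have := image_norm_le_of_norm_deriv_right_le_deriv_boundary (a := (0 : ℝ)) (b := 1)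
    (f := fun t : ℝ => g (x + t • v) - g x - t • H x v)
    (f' := fun t => H (x + t • v) v - H x v)
    (fun t _ => (hd t).continuousAt.continuousWithinAt)
    (fun t _ => (hd t).hasDerivWithinAt)
    (B := fun t : ℝ => L / 2 * ‖v‖ ^ 2 * t ^ 2) (B' := fun t => L * ‖v‖ ^ 2 * t)
    (by simp) hB
    (fun t ht => by
      have h0 : (H (x + t • v) v - H x v) = (H (x + t • v) - H x) v := rfl
      rw [h0]
      refine ((H (x + t • v) - H x).le_opNorm v).trans ?_
      have h1 := hlip (x + t • v) x
      rw [add_sub_cancel_left, norm_smul, Real.norm_of_nonneg ht.1] at h1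
      calc _ ≤ L * (t * ‖v‖) * ‖v‖ := by gcongr
        _ = _ := by ring)
    (Set.right_mem_Icc.2 zero_le_one)
  simpa using this

theorem aux_f {E : Type*} [NormedAddCommGroup E] [InnerProductSpace ℝ E] [CompleteSpace E]
    (f : E → ℝ)
    (g : E → E) (H : E → E →L[ℝ] E) (hg : ∀ x, HasGradientAt f (g x) x)
    (hH : ∀ x, HasFDerivAt g (H x) x)
    (L : ℝ) (hlip : ∀ x y, ‖H x - H y‖ ≤ L * ‖x - y‖) (x v : E) :
    f (x + v) ≤ f x + ⟪g x, v⟫ + 1 / 2 * ⟪v, H x v⟫ + L / 6 * ‖v‖ ^ 3 := by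
  have hline : ∀ t : ℝ, HasDerivAt (fun t : ℝ => x + t • v) v t := fun t => by
    simpa using ((hasDerivAt_id t).smul_const v).const_add x
  have hd : ∀ t : ℝ, HasDerivAt
      (fun t : ℝ => f (x + t • v) - f x - t * ⟪g x, v⟫ - t ^ 2 * (1 / 2 * ⟪v, H x v⟫))
      (⟪g (x + t • v), v⟫ - ⟪g x, v⟫ - t * ⟪v, H x v⟫) t := fun t => by
    have h1 := (hg (x + t • v)).hasFDerivAt.comp_hasDerivAt t (hline t)
    have h2 := ((h1.sub_const (f x)).sub ((hasDerivAt_id t).mul_const (⟪g x, v⟫))).sub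
      ((hasDerivAt_pow 2 t).mul_const (1 / 2 * ⟪v, H x v⟫))
    refine h2.congr_deriv ?_
    simp
    ring
  have hB : ∀ t : ℝ, HasDerivAt (fun t : ℝ => L / 6 * ‖v‖ ^ 3 * t ^ 3)
      (L / 2 * ‖v‖ ^ 3 * t ^ 2) t :=
    fun t => by
      have := (hasDerivAt_pow 3 t).const_mul (L / 6 * ‖v‖ ^ 3)
      refine this.congr_deriv ?_
      push_cast; ring
  have := image_norm_le_of_norm_deriv_right_le_deriv_boundary (a := (0 : ℝ)) (b := 1)
    (f := fun t : ℝ => f (x + t • v) - f x - t * ⟪g x, v⟫ - t ^ 2 * (1 / 2 * ⟪v, H x v⟫))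
    (f' := fun t => ⟪g (x + t • v), v⟫ - ⟪g x, v⟫ - t * ⟪v, H x v⟫)
    (fun t _ => (hd t).continuousAt.continuousWithinAt)
    (fun t _ => (hd t).hasDerivWithinAt)
    (B := fun t : ℝ => L / 6 * ‖v‖ ^ 3 * t ^ 3) (B' := fun t => L / 2 * ‖v‖ ^ 3 * t ^ 2)
    (by simp) hB
    (fun t ht => by
      have h0 : ⟪g (x + t • v), v⟫ - ⟪g x, v⟫ - t * ⟪v, H x v⟫
          = ⟪g (x + t • v) - g x - H x (t • v), v⟫ := by
        rw [inner_sub_left, inner_sub_left, map_smul, real_inner_smul_left,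
          real_inner_comm v (H x v)]
      rw [h0]
      refine (norm_inner_le_norm _ _).trans ?_
      have h1 := aux_grad g H hH L hlip x (t • v)
      rw [norm_smul, Real.norm_of_nonneg ht.1] at h1
      calc _ ≤ L / 2 * (t * ‖v‖) ^ 2 * ‖v‖ := by gcongr
        _ = _ := by ring)
    (Set.right_mem_Icc.2 zero_le_one)
  have h2 := (le_abs_self _).trans this
  simp at h2
  linarith

set_option maxHeartbeats 1000000 in
/-- Lemma 3.5: line search along the inexact regularized Newton direction. -/
theorem inexact_regularized_newton_step_linesearch
    {n : ℕ} (f : EuclideanSpace ℝ (Fin n) → ℝ)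
    (gradf : EuclideanSpace ℝ (Fin n) → EuclideanSpace ℝ (Fin n))
    (hessf : EuclideanSpace ℝ (Fin n) → EuclideanSpace ℝ (Fin n) →L[ℝ] EuclideanSpace ℝ (Fin n))
    (hf : ContDiff ℝ 2 f)
    (hgrad : ∀ x, HasGradientAt f (gradf x) x)
    (hhess : ∀ x, HasFDerivAt gradf (hessf x) x)
    (L_H : ℝ) (hLH : 0 < L_H)
    (hlip : ∀ x y, ‖hessf x - hessf y‖ ≤ L_H * ‖x - y‖)
    (θ η ε_H ζ U_g : ℝ) (hθ : θ ∈ Set.Ioo (0:ℝ) 1) (hη : 0 < η)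
    (hεH : ε_H ∈ Set.Ioo (0:ℝ) 1) (hζ : ζ ∈ Set.Ioo (0:ℝ) 1) (hUg : 0 < U_g)
    (x d : EuclideanSpace ℝ (Fin n))
    (hpsd : ∀ v : EuclideanSpace ℝ (Fin n), -ε_H * ‖v‖^2 ≤ ⟪v, hessf x v⟫)
    (hgb : ‖gradf x‖ ≤ U_g) (hgne : gradf x ≠ 0)
    (hres : ‖hessf x d + (2*ε_H) • d + gradf x‖ ≤ ζ/2 * min (‖gradf x‖) (ε_H * ‖d‖))
    (horth : ⟪gradf x, hessf x d + (2*ε_H) • d + gradf x⟫ = 0) :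
    ∃ jk : ℕ,
      (f (x + θ^jk • d) < f x - η/6 * θ^(3*jk) * ‖d‖^3) ∧
      (∀ j : ℕ, j < jk → ¬ (f (x + θ^j • d) < f x - η/6 * θ^(3*j) * ‖d‖^3)) ∧
      (jk : ℝ) ≤ max ((1/2) * Real.logb θ
        (3/(L_H+η) * ((1-ζ) * ε_H^2 / (U_g * Real.sqrt (1+ζ^2/4))))) 0 + 1 ∧
      f x - f (x + θ^jk • d) ≥
        η/6 * min ((4/(4 + ζ + Real.sqrt ((4+ζ)^2 + 8*L_H)))^3) ((3*θ^2*(1-ζ)/(L_H+η))^3) *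
          min (‖gradf (x + θ^jk • d)‖^3 / ε_H^3) (ε_H^3) := by
  obtain ⟨hθ0, hθ1⟩ := hθ
  obtain ⟨hε0, hε1⟩ := hεH
  obtain ⟨hζ0, hζ1⟩ := hζ
  set g := gradf x with hgdef
  set H := hessf x with hHdef
  obtain ⟨r, hr⟩ : ∃ r, r = H d + (2*ε_H) • d + g := ⟨_, rfl⟩
  rw [← hr] at hres horth
  have hd0 : d ≠ 0 := by
    rintro rfl
    simp at hr
    rw [hr] at horth
    exact hgne (inner_self_eq_zero.1 horth)
  have hN : 0 < ‖d‖ := norm_pos_iff.2 hd0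
  have hr1 : ‖r‖ ≤ ζ/2 * ‖g‖ := hres.trans (by gcongr; exact min_le_left _ _)
  have hr2 : ‖r‖ ≤ ζ/2 * (ε_H * ‖d‖) := hres.trans (by gcongr; exact min_le_right _ _)
  have hLη : 0 < L_H + η := by positivity
  set S := Real.sqrt (1+ζ^2/4) with hS
  have hS0 : 0 < S := Real.sqrt_pos.2 (by positivity)
  -- the norm bound on d
  have hrg : r - g = H d + (2*ε_H) • d := by rw [hr]; abel
  have hq : ⟪d, r - g⟫ = ⟪d, H d⟫ + 2 * ε_H * ‖d‖^2 := by
    rw [hrg, inner_add_right, real_inner_smul_right, real_inner_self_eq_norm_sq]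
  have hpd := hpsd d
  have hnrg : ‖r - g‖ ≤ S * ‖g‖ := by
    refine (sq_le_sq₀ (norm_nonneg _) (by positivity)).1 ?_
    rw [norm_sub_sq_real, real_inner_comm, horth, mul_pow, hS, Real.sq_sqrt (by positivity)]
    nlinarith [mul_self_le_mul_self (norm_nonneg r) hr1]
  have hdb : ε_H * ‖d‖ ≤ U_g * S := by
    have h1 : ε_H * ‖d‖^2 ≤ ‖d‖ * ‖r - g‖ := by
      have := real_inner_le_norm d (r - g)
      linarith
    have h2 : ε_H * ‖d‖ ≤ ‖r - g‖ := by
      refine le_of_mul_le_mul_left ?_ hN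
      linarith
    calc _ ≤ S * ‖g‖ := h2.trans hnrg
      _ ≤ S * U_g := by gcongr
      _ = _ := mul_comm _ _
  -- failed steps
  have hfail : ∀ j : ℕ, ¬ (f (x + θ^j • d) < f x - η/6 * θ^(3*j) * ‖d‖^3) →
      3 * (1-ζ) * ε_H < (L_H + η) * ((θ^j)^2 * ‖d‖) := by
    intro j hj
    have ha0 : 0 < θ^j := pow_pos hθ0 j
    have ha1 : θ^j ≤ 1 := pow_le_one₀ hθ0.le hθ1.le
    have h3 : θ^(3*j) = (θ^j)^3 := by rw [mul_comm, pow_mul]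
    rw [h3] at hj
    generalize θ^j = a at *
    have hT := aux_f f gradf hessf hgrad hhess L_H hlip x (a • d)
    rw [← hgdef, ← hHdef, map_smul, real_inner_smul_left, real_inner_smul_right,
      real_inner_smul_right, norm_smul, Real.norm_of_nonneg ha0.le] at hT
    have hgd : ⟪g, d⟫ = ⟪r, d⟫ - ⟪d, H d⟫ - 2 * ε_H * ‖d‖^2 := by
      rw [inner_sub_right, real_inner_comm, real_inner_comm g d] at hq
      linarith
    have hrd : ⟪r, d⟫ ≤ ζ/2 * ε_H * ‖d‖^2 := by
      refine (real_inner_le_norm r d).trans ?_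
      calc _ ≤ ζ/2 * (ε_H * ‖d‖) * ‖d‖ := by gcongr
        _ = _ := by ring
    rw [hgd] at hT
    have hj := not_lt.1 hj
    generalize ⟪d, H d⟫ = p at *
    generalize ⟪r, d⟫ = w at *
    have e1 : a * w ≤ a * (ζ/2 * ε_H * ‖d‖^2) := by gcongr
    have e2 : a * (1 - a/2) * (-ε_H * ‖d‖^2) ≤ a * (1 - a/2) * p :=
      mul_le_mul_of_nonneg_left hpd (mul_nonneg ha0.le (by linarith))
    have e3 : 0 < a * a * (ε_H * ‖d‖^2) := by positivity
    have e4 : 0 ≤ a * (ε_H * ‖d‖^2) := by positivity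
    have e5 : 0 < a * ‖d‖^2 := by positivity
    have e6 : a * ‖d‖^2 * (3 * (1-ζ) * ε_H) < a * ‖d‖^2 * ((L_H + η) * (a^2 * ‖d‖)) := by
      nlinarith
    exact lt_of_mul_lt_mul_left e6 e5.le
  -- the threshold
  obtain ⟨C, hC⟩ : ∃ C, C = 3/(L_H+η) * ((1-ζ) * ε_H^2 / (U_g * S)) := ⟨_, rfl⟩
  have hC0 : 0 < C := by
    have : 0 < 1 - ζ := by linarith
    rw [hC]; positivity
  rw [← hC]
  have hfail2 : ∀ j : ℕ, ¬ (f (x + θ^j • d) < f x - η/6 * θ^(3*j) * ‖d‖^3) →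
      C < (θ^j)^2 := by
    intro j hj
    have h := hfail j hj
    have hCe : C = 3 * (1-ζ) * ε_H^2 / ((L_H+η) * (U_g * S)) := by
      rw [hC]; field_simp
    rw [hCe, div_lt_iff₀ (by positivity)]
    calc 3 * (1-ζ) * ε_H^2 = 3 * (1-ζ) * ε_H * ε_H := by ring
      _ < (L_H + η) * ((θ^j)^2 * ‖d‖) * ε_H := by gcongr
      _ = (L_H + η) * (θ^j)^2 * (ε_H * ‖d‖) := by ring
      _ ≤ (L_H + η) * (θ^j)^2 * (U_g * S) := by gcongr
      _ = _ := by ring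
  have hex : ∃ j : ℕ, f (x + θ^j • d) < f x - η/6 * θ^(3*j) * ‖d‖^3 := by
    by_contra hne
    push Not at hne
    obtain ⟨m, hm⟩ := exists_pow_lt_of_lt_one hC0 hθ1
    have h1 := hfail2 m (not_lt.2 (hne m))
    have ha0 : 0 < θ^m := pow_pos hθ0 m
    have ha1 : θ^m ≤ 1 := pow_le_one₀ hθ0.le hθ1.le
    nlinarith
  classical
  obtain ⟨jk, hjk, hmin⟩ : ∃ jk : ℕ, (f (x + θ^jk • d) < f x - η/6 * θ^(3*jk) * ‖d‖^3) ∧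
      ∀ j : ℕ, j < jk → ¬ (f (x + θ^j • d) < f x - η/6 * θ^(3*j) * ‖d‖^3) :=
    ⟨Nat.find hex, Nat.find_spec hex, fun j hj => Nat.find_min hex hj⟩
  refine ⟨jk, hjk, hmin, ?_, ?_⟩
  · rcases jk with _ | k
    · have := le_max_right ((1/2) * Real.logb θ C) 0
      push_cast
      linarith
    · have h := hfail2 k (hmin k (Nat.lt_succ_self k))
      have h2 : ((2 * k : ℕ) : ℝ) < Real.logb θ C := by
        rw [Real.lt_logb_iff_rpow_lt_of_base_lt_one hθ0 hθ1 hC0, Real.rpow_natCast, mul_comm, pow_mul]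
        exact h
      have := le_max_left ((1/2) * Real.logb θ C) 0
      push_cast at h2 ⊢
      linarith
  · set G := ‖gradf (x + θ^jk • d)‖ with hG
    have hG0 : 0 ≤ G := norm_nonneg _
    obtain ⟨c, hc⟩ : ∃ c, c = 4/(4 + ζ + Real.sqrt ((4+ζ)^2 + 8*L_H)) := ⟨_, rfl⟩
    obtain ⟨e, he⟩ : ∃ e, e = 3*θ^2*(1-ζ)/(L_H+η) := ⟨_, rfl⟩
    rw [← hc, ← he]
    have hc0 : 0 < c := by rw [hc]; positivity
    have he0 : 0 < e := by
      have : 0 < 1 - ζ := by linarith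
      rw [he]; positivity
    have hm0 : 0 ≤ min (G^3 / ε_H^3) (ε_H^3) := le_min (by positivity) (by positivity)
    suffices hkey : min (c^3) (e^3) * min (G^3 / ε_H^3) (ε_H^3) ≤ (θ^jk)^3 * ‖d‖^3 by
      have h3 : θ^(3*jk) = (θ^jk)^3 := by rw [mul_comm, pow_mul]
      rw [h3] at hjk
      have := mul_le_mul_of_nonneg_left hkey (by positivity : 0 ≤ η/6)
      linarith
    rcases jk with _ | k
    · have hcq : L_H/2 * c^2 + (4+ζ)/2 * c = 1 := by
        have hs := Real.sq_sqrt (by positivity : 0 ≤ (4+ζ)^2 + 8*L_H)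
        have hs0 := Real.sqrt_nonneg ((4+ζ)^2 + 8*L_H)
        have hcs : c * (4 + ζ + Real.sqrt ((4+ζ)^2 + 8*L_H)) = 4 := by
          rw [hc]
          exact div_mul_cancel₀ _ (by positivity)
        generalize Real.sqrt ((4+ζ)^2 + 8*L_H) = s at *
        linear_combination 1/16 * ((c * (s - (4+ζ)) + 4) * hcs - c^2 * hs)
      have hGb : G ≤ L_H/2 * ‖d‖^2 + (4+ζ)/2 * ε_H * ‖d‖ := by
        have h1 := aux_grad gradf hessf hhess L_H hlip x d
        have h2 : gradf (x + θ^0 • d) = (gradf (x + d) - gradf x - hessf x d) + (r - (2*ε_H) • d) := by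
          rw [hr, pow_zero, one_smul, ← hgdef, ← hHdef]; abel
        have h3 : ‖(2*ε_H) • d‖ = 2 * ε_H * ‖d‖ := by
          rw [norm_smul, Real.norm_of_nonneg (by positivity)]
        rw [hG, h2]
        refine (norm_add_le _ _).trans ?_
        have h4 := norm_sub_le r ((2*ε_H) • d)
        rw [h3] at h4
        linarith
      have hmain : c * min (G/ε_H) ε_H ≤ ‖d‖ := by
        by_contra hlt
        have hlt := not_le.1 hlt
        have m1 : min (G/ε_H) ε_H * ε_H ≤ G := by
          have := min_le_left (G/ε_H) ε_H
          rwa [le_div_iff₀ hε0] at this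
        have m2 : min (G/ε_H) ε_H ≤ ε_H := min_le_right _ _
        have m0 : 0 ≤ min (G/ε_H) ε_H := le_min (by positivity) hε0.le
        generalize min (G/ε_H) ε_H = m at *
        have k1 : ‖d‖^2 ≤ (c*m)^2 := by gcongr
        have k2 : m^2 ≤ m * ε_H := by nlinarith
        have k3 : L_H/2 * ‖d‖^2 ≤ L_H/2 * c^2 * (m * ε_H) := by
          calc _ ≤ L_H/2 * (c*m)^2 := by gcongr
            _ = L_H/2 * c^2 * m^2 := by ring
            _ ≤ _ := by gcongr
        have k4 : (4+ζ)/2 * ε_H * ‖d‖ < (4+ζ)/2 * ε_H * (c * m) := by gcongr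
        have k5 : L_H/2 * c^2 * (m * ε_H) + (4+ζ)/2 * ε_H * (c * m) = m * ε_H := by
          linear_combination (m * ε_H) * hcq
        linarith
      have hmm : min (G^3 / ε_H^3) (ε_H^3) ≤ (min (G/ε_H) ε_H)^3 := by
        rcases min_choice (G/ε_H) ε_H with h | h <;> rw [h]
        · rw [div_pow]; exact min_le_left _ _
        · exact min_le_right _ _
      have m0 : 0 ≤ min (G/ε_H) ε_H := le_min (by positivity) hε0.le
      calc _ ≤ c^3 * (min (G/ε_H) ε_H)^3 := by
            gcongr
            exact min_le_left _ _
        _ = (c * min (G/ε_H) ε_H)^3 := by ring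
        _ ≤ ‖d‖^3 := by gcongr
        _ = _ := by simp
    · have h := hfail k (hmin k (Nat.lt_succ_self k))
      have ha0 : 0 < θ^(k+1) := pow_pos hθ0 _
      have ha1 : θ^(k+1) ≤ 1 := pow_le_one₀ hθ0.le hθ1.le
      have hmain : e * ε_H ≤ θ^(k+1) * ‖d‖ := by
        have h1 : e * ε_H ≤ (θ^(k+1))^2 * ‖d‖ := by
          rw [he, div_mul_eq_mul_div, div_le_iff₀ hLη]
          have := mul_le_mul_of_nonneg_left h.le (sq_nonneg θ)
          calc _ = θ^2 * (3 * (1-ζ) * ε_H) := by ring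
            _ ≤ _ := this
            _ = _ := by ring
        refine h1.trans ?_
        gcongr
        nlinarith
      calc _ ≤ e^3 * ε_H^3 := by
            gcongr
            · exact min_le_right _ _
            · exact min_le_right _ _
        _ = (e * ε_H)^3 := by ring
        _ ≤ (θ^(k+1) * ‖d‖)^3 := by gcongr
        _ = _ := by ring
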